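/- Let 0<q<1, a,b,c∈ℂ with c ∉ {1,q^{-1},q^{-2},…}, c≠0, and z∈ℂ with |z|<1 and |abz/c|<1. Then ₂φ₁(a,b;c;q,z) = ((abz/c;q)_∞/(z;q)_∞) · ₂φ₁(c/a, c/b; c; q, abz/c). -/

import Mathlib

/-!
Write `σ` for the substitution `X ↦ qX` on formal power series.  The two-term recurrence for the
coefficients of `F(X) = ₂φ₁(a,b;c;q,X)` amounts to the `q`-difference equation
`(1 - σ)(q - cσ) F = qX (1 - aσ)(1 - bσ) F`, which determines `F` up to its constant term.
With `w = ab/c`, the `q`-binomial series `R(X) = ₂φ₁(w,0;0;q,X)` satisfies the first-order equation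
`(1 - X) R = (1 - wX) σR`.  By the latter, the equation of `G(X) = ₂φ₁(c/a,c/b;c;q,wX)`, multiplied
by `σR`, becomes the equation of `F` for `RG`, so `F = RG` as formal power series.  Evaluating at
`z`, where both factors converge absolutely, leaves the `q`-binomial theorem
`R(z) = (wz;q)_∞ / (z;q)_∞`, which follows by iterating `(1 - z) R(z) = (1 - wz) R(qz)`, since
`q^N z → 0`.
-/

noncomputable section

/-- The finite q-shifted factorial `(a;q)_k`. -/
def qp (q a : ℂ) (k : ℕ) : ℂ := ∏ j ∈ Finset.range k, (1 - a * q ^ j)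

/-- The infinite q-shifted factorial `(a;q)_∞`. -/
def qpi (q a : ℂ) : ℂ := ∏' j : ℕ, (1 - a * q ^ j)

/-- The basic hypergeometric series `₂φ₁(a,b;c;q,z)`. -/
def phi21 (q a b c z : ℂ) : ℂ :=
  ∑' k : ℕ, qp q a k * qp q b k / (qp q c k * qp q q k) * z ^ k

open Filter Topology PowerSeries

section TsumEval

variable {R : Type*} [NormedCommRing R]

/-- The value `∑ₙ Fₙ zⁿ` of a formal power series `F` at a point `z`; as an unconditional sum it has
the junk value `0` where the series is not summable. -/
def tsumEval (F : R⟦X⟧) (z : R) : R := ∑' n, coeff n F * z ^ n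

/-- Absolute convergence of a formal power series `F` at a point `z`, the condition under which
`tsumEval` is multiplicative. -/
def AbsConvergesAt (F : R⟦X⟧) (z : R) : Prop := Summable fun n => ‖coeff n F * z ^ n‖

lemma tsumEval_zero (F : R⟦X⟧) : tsumEval F 0 = constantCoeff F := by
  rw [tsumEval, tsum_eq_single 0 fun n hn => by simp [hn]]
  simp

lemma coeff_rescale_mul_pow (a z : R) (F : R⟦X⟧) (n : ℕ) :
    coeff n (rescale a F) * z ^ n = coeff n F * (a * z) ^ n := by
  rw [coeff_rescale, mul_pow]
  ring

lemma tsumEval_rescale (a z : R) (F : R⟦X⟧) : tsumEval (rescale a F) z = tsumEval F (a * z) :=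
  tsum_congr (coeff_rescale_mul_pow a z F)

lemma absConvergesAt_rescale {a z : R} {F : R⟦X⟧} :
    AbsConvergesAt (rescale a F) z ↔ AbsConvergesAt F (a * z) := by
  simp only [AbsConvergesAt, coeff_rescale_mul_pow]

lemma absConvergesAt_coe (p : Polynomial R) (z : R) : AbsConvergesAt (p : R⟦X⟧) z :=
  summable_of_ne_finset_zero (s := p.support) fun n hn => by
    simp [Polynomial.notMem_support_iff.mp hn]

lemma tsumEval_coe (p : Polynomial R) (z : R) : tsumEval (p : R⟦X⟧) z = p.eval z := by
  rw [tsumEval, Polynomial.eval_eq_sum, Polynomial.sum]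
  simp only [Polynomial.coeff_coe]
  exact tsum_eq_sum fun n hn => by simp [Polynomial.notMem_support_iff.mp hn]

lemma tsumEval_mul [CompleteSpace R] {F G : R⟦X⟧} {z : R} (hF : AbsConvergesAt F z)
    (hG : AbsConvergesAt G z) : tsumEval (F * G) z = tsumEval F z * tsumEval G z := by
  rw [tsumEval, tsumEval, tsumEval,
    tsum_mul_tsum_eq_tsum_sum_antidiagonal_of_summable_norm hF hG]
  refine tsum_congr fun n => ?_
  rw [coeff_mul, Finset.sum_mul]
  refine Finset.sum_congr rfl fun p hp => ?_
  rw [← Finset.HasAntidiagonal.mem_antidiagonal.mp hp, pow_add]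
  ring

lemma tsumEval_one_sub_C_mul_X_mul [CompleteSpace R] (a : R) {F : R⟦X⟧} {z : R}
    (hF : AbsConvergesAt F z) :
    tsumEval ((1 - C a * X) * F) z = (1 - a * z) * tsumEval F z := by
  have hp : (1 - C a * X : R⟦X⟧) = ((1 - Polynomial.C a * Polynomial.X : Polynomial R) : R⟦X⟧) := by
    simp
  rw [hp, tsumEval_mul (absConvergesAt_coe _ z) hF, tsumEval_coe]
  simp

lemma AbsConvergesAt.tendsto_tsumEval {𝕜 ι : Type*} [NormedField 𝕜] [CompleteSpace 𝕜]
    {F : 𝕜⟦X⟧} {z : 𝕜} (hF : AbsConvergesAt F z) {l : Filter ι} {u : ι → 𝕜}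
    (hu : Tendsto u l (𝓝 0)) (hle : ∀ᶠ i in l, ‖u i‖ ≤ ‖z‖) :
    Tendsto (fun i => tsumEval F (u i)) l (𝓝 (constantCoeff F)) := by
  rw [← tsumEval_zero]
  refine tendsto_tsum_of_dominated_convergence hF (fun n => (hu.pow n).const_mul _) ?_
  filter_upwards [hle] with i hi n
  rw [norm_mul, norm_mul, norm_pow, norm_pow]
  gcongr

end TsumEval

lemma rescale_C {R : Type*} [CommSemiring R] (a r : R) : rescale a (C r) = C r := by
  ext n
  cases n <;> simp [coeff_C]

lemma constantCoeff_rescale {R : Type*} [CommSemiring R] (a : R) (F : R⟦X⟧) :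
    constantCoeff (rescale a F) = constantCoeff F := by
  rw [← coeff_zero_eq_constantCoeff_apply, coeff_rescale, pow_zero, one_mul,
    coeff_zero_eq_constantCoeff_apply]

lemma rescale_comm {R : Type*} [CommSemiring R] (a b : R) (F : R⟦X⟧) :
    rescale a (rescale b F) = rescale b (rescale a F) := by
  rw [rescale_rescale, rescale_rescale, mul_comm]

section QShiftedFactorial

lemma mul_pow_ne_one_of_norm_lt_one {𝕜 : Type*} [NormedField 𝕜] {q z : 𝕜} (hq : ‖q‖ ≤ 1)
    (hz : ‖z‖ < 1) (n : ℕ) : z * q ^ n ≠ 1 := by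
  intro h
  have hlt : ‖z * q ^ n‖ < 1 := by
    rw [norm_mul, norm_pow]
    exact mul_lt_one_of_nonneg_of_lt_one_left (norm_nonneg z) hz (pow_le_one₀ (norm_nonneg q) hq)
  rw [h, norm_one] at hlt
  exact lt_irrefl 1 hlt

lemma qp_zero (q a : ℂ) : qp q a 0 = 1 := Finset.prod_range_zero _

lemma qp_succ (q a : ℂ) (n : ℕ) : qp q a (n + 1) = qp q a n * (1 - a * q ^ n) :=
  Finset.prod_range_succ _ n

variable {q : ℂ} (hq : ‖q‖ < 1)
include hq

lemma summable_norm_neg_mul_pow (a : ℂ) : Summable fun j : ℕ => ‖-(a * q ^ j)‖ := by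
  simp only [norm_neg, norm_mul, norm_pow]
  exact (summable_geometric_of_lt_one (norm_nonneg q) hq).mul_left _

lemma tendsto_qp (a : ℂ) : Tendsto (qp q a) atTop (𝓝 (qpi q a)) := by
  have h := (multipliable_one_add_of_summable (summable_norm_neg_mul_pow hq a)).hasProd
  simp only [← sub_eq_add_neg] at h
  exact h.tendsto_prod_nat

lemma qpi_ne_zero {a : ℂ} (ha : ∀ n : ℕ, a * q ^ n ≠ 1) : qpi q a ≠ 0 := by
  simp only [qpi, sub_eq_add_neg]
  refine tprod_one_add_ne_zero_of_summable (fun n => ?_) (summable_norm_neg_mul_pow hq a)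
  rw [← sub_eq_add_neg]
  exact sub_ne_zero.mpr (ha n).symm

lemma tendsto_one_sub_mul_pow (a : ℂ) : Tendsto (fun n : ℕ => 1 - a * q ^ n) atTop (𝓝 1) := by
  simpa using ((tendsto_pow_atTop_nhds_zero_of_norm_lt_one hq).const_mul a).const_sub 1

end QShiftedFactorial

section FormalSeries

/-- The formal power series `₂φ₁(a,b;c;q,X)`.  The `q`-binomial series `₁φ₀(w;q,X)` is its special
case `b = c = 0`. -/
def phi21Series (q a b c : ℂ) : ℂ⟦X⟧ :=
  PowerSeries.mk fun n => qp q a n * qp q b n / (qp q c n * qp q q n)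

lemma phi21_eq_tsumEval (q a b c z : ℂ) : phi21 q a b c z = tsumEval (phi21Series q a b c) z := by
  simp only [phi21, tsumEval, phi21Series, coeff_mk]

lemma constantCoeff_phi21Series (q a b c : ℂ) : constantCoeff (phi21Series q a b c) = 1 := by
  simp [phi21Series, qp_zero]

lemma coeff_succ_phi21Series (q a b c : ℂ) (n : ℕ) :
    coeff (n + 1) (phi21Series q a b c) =
      (1 - a * q ^ n) * (1 - b * q ^ n) / ((1 - c * q ^ n) * (1 - q * q ^ n)) *
        coeff n (phi21Series q a b c) := by
  simp only [phi21Series, coeff_mk, qp_succ, div_eq_mul_inv, mul_inv]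
  ring

lemma absConvergesAt_phi21Series {q z : ℂ} (hq : ‖q‖ < 1) (a b c : ℂ) (hz : ‖z‖ < 1) :
    AbsConvergesAt (phi21Series q a b c) z := by
  set ρ : ℕ → ℂ := fun n =>
    (1 - a * q ^ n) * (1 - b * q ^ n) / ((1 - c * q ^ n) * (1 - q * q ^ n)) * z with hρ
  have hρz : Tendsto ρ atTop (𝓝 z) := by
    simpa using (((tendsto_one_sub_mul_pow hq a).mul (tendsto_one_sub_mul_pow hq b)).div
      ((tendsto_one_sub_mul_pow hq c).mul (tendsto_one_sub_mul_pow hq q)) (by simp)).mul_const z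
  obtain ⟨r, hzr, hr⟩ := exists_between hz
  refine summable_of_ratio_norm_eventually_le hr ?_
  filter_upwards [hρz.norm.eventually_le_const hzr] with n hn
  have hratio : coeff (n + 1) (phi21Series q a b c) * z ^ (n + 1) =
      ρ n * (coeff n (phi21Series q a b c) * z ^ n) := by
    rw [coeff_succ_phi21Series, hρ]
    ring
  rw [hratio, norm_norm, norm_norm, norm_mul]
  gcongr

/-- The second-order `q`-difference operator `(1 - σ)(q - cσ) - qX (1 - aσ)(1 - bσ)` annihilating
`₂φ₁(a,b;c;q,X)`, where `σ = rescale q`. -/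
def phi21Op (q a b c : ℂ) (F : ℂ⟦X⟧) : ℂ⟦X⟧ :=
  C q * F - (C q + C c) * rescale q F + C c * rescale q (rescale q F) -
    C q * (X * (F - (C a + C b) * rescale q F + C a * C b * rescale q (rescale q F)))

lemma coeff_zero_phi21Op (q a b c : ℂ) (F : ℂ⟦X⟧) : coeff 0 (phi21Op q a b c F) = 0 := by
  simp [phi21Op, constantCoeff_rescale]
  ring

lemma coeff_succ_phi21Op (q a b c : ℂ) (F : ℂ⟦X⟧) (n : ℕ) :
    coeff (n + 1) (phi21Op q a b c F) =
      q * ((1 - c * q ^ n) * (1 - q * q ^ n) * coeff (n + 1) F -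
        (1 - a * q ^ n) * (1 - b * q ^ n) * coeff n F) := by
  simp only [phi21Op, map_sub, map_add, add_mul, mul_assoc, coeff_C_mul, coeff_succ_X_mul,
    coeff_rescale]
  ring

variable {q : ℂ} (hq : ∀ n : ℕ, q * q ^ n ≠ 1)
include hq

section Denominator

variable {c : ℂ} (hc : ∀ n : ℕ, c * q ^ n ≠ 1)
include hc

lemma one_sub_mul_coeff_succ_phi21Series (a b : ℂ) (n : ℕ) :
    (1 - c * q ^ n) * (1 - q * q ^ n) * coeff (n + 1) (phi21Series q a b c) =
      (1 - a * q ^ n) * (1 - b * q ^ n) * coeff n (phi21Series q a b c) := by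
  have hcn : 1 - c * q ^ n ≠ 0 := sub_ne_zero.mpr (hc n).symm
  have hqn : 1 - q * q ^ n ≠ 0 := sub_ne_zero.mpr (hq n).symm
  rw [coeff_succ_phi21Series, ← mul_assoc, mul_div_cancel₀ _ (mul_ne_zero hcn hqn)]

lemma phi21Op_phi21Series (a b : ℂ) : phi21Op q a b c (phi21Series q a b c) = 0 := by
  ext n
  cases n with
  | zero => exact coeff_zero_phi21Op ..
  | succ n =>
    rw [coeff_succ_phi21Op, one_sub_mul_coeff_succ_phi21Series hq hc, sub_self, mul_zero, map_zero]

lemma eq_phi21Series_of_phi21Op_eq_zero (hq0 : q ≠ 0) {a b : ℂ} {F : ℂ⟦X⟧}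
    (hF : phi21Op q a b c F = 0) (hF0 : constantCoeff F = 1) : F = phi21Series q a b c := by
  ext n
  induction n with
  | zero => simp [hF0, constantCoeff_phi21Series]
  | succ n ih =>
    have hcn : 1 - c * q ^ n ≠ 0 := sub_ne_zero.mpr (hc n).symm
    have hqn : 1 - q * q ^ n ≠ 0 := sub_ne_zero.mpr (hq n).symm
    have hrec := coeff_succ_phi21Op q a b c F n
    rw [hF, map_zero, zero_eq_mul, or_iff_right hq0, sub_eq_zero] at hrec
    refine mul_left_cancel₀ (mul_ne_zero hcn hqn) ?_
    rw [hrec, ih, one_sub_mul_coeff_succ_phi21Series hq hc]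

end Denominator

lemma one_sub_X_mul_phi21Series_zero_zero (w : ℂ) :
    (1 - X) * phi21Series q w 0 0 = (1 - C w * X) * rescale q (phi21Series q w 0 0) := by
  ext n
  cases n with
  | zero => simp [constantCoeff_rescale]
  | succ n =>
    have hrec := one_sub_mul_coeff_succ_phi21Series hq (c := 0) (by simp) w 0 n
    simp only [sub_mul, one_mul, mul_assoc, map_sub, coeff_succ_X_mul, coeff_C_mul, coeff_rescale]
    linear_combination hrec

lemma rescale_phi21Series_qdiff {w α β : ℂ} (hc : ∀ n : ℕ, w * α * β * q ^ n ≠ 1) :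
    let G := rescale w (phi21Series q α β (w * α * β))
    C q * G - (C q + C (w * α * β)) * rescale q G + C (w * α * β) * rescale q (rescale q G) =
      C q * (X * (C w * G - (C (w * β) + C (w * α)) * rescale q G +
        C (w * α * β) * rescale q (rescale q G))) := by
  have h := congrArg (rescale w) (phi21Op_phi21Series hq hc α β)
  simp only [phi21Op, map_add, map_sub, map_mul, map_zero, rescale_C, rescale_X,
    rescale_comm w q] at h ⊢
  linear_combination h

/-- Euler's transformation for formal power series, in the parameters `α = c/a`, `β = c/b`,
`w = ab/c`. -/
theorem phi21Series_eq_mul_rescale (hq0 : q ≠ 0) {w α β : ℂ}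
    (hc : ∀ n : ℕ, w * α * β * q ^ n ≠ 1) :
    phi21Series q (w * β) (w * α) (w * α * β) =
      phi21Series q w 0 0 * rescale w (phi21Series q α β (w * α * β)) := by
  refine (eq_phi21Series_of_phi21Op_eq_zero hq hc hq0 ?_ ?_).symm
  · have hG := rescale_phi21Series_qdiff hq hc
    have hR := one_sub_X_mul_phi21Series_zero_zero hq w
    have hσR := congrArg (rescale q) hR
    generalize rescale w (phi21Series q α β (w * α * β)) = G at hG ⊢
    generalize phi21Series q w 0 0 = R at hR hσR ⊢
    simp only [phi21Op, map_sub, map_mul, map_one, rescale_C, rescale_X] at hG hσR ⊢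
    -- `hR` and `hσR` trade `R` and `σσR` for `σR`, which then factors out and leaves `hG`.
    linear_combination rescale q R * hG + C q * G * hR -
      C w * C α * C β * rescale q (rescale q G) * hσR
  · simp [constantCoeff_phi21Series, constantCoeff_rescale]

end FormalSeries

section QBinomial

variable {q z : ℂ}

lemma mul_qp_eq_qp_mul_of_qdiff {f : ℂ → ℂ} {w : ℂ} (hq : ‖q‖ ≤ 1)
    (hf : ∀ x, ‖x‖ < 1 → (1 - x) * f x = (1 - w * x) * f (q * x)) (hz : ‖z‖ < 1) (N : ℕ) :
    f z * qp q z N = qp q (w * z) N * f (q ^ N * z) := by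
  induction N with
  | zero => simp [qp_zero]
  | succ N ih =>
    have hN : ‖q ^ N * z‖ < 1 := by
      rw [norm_mul, norm_pow]
      exact mul_lt_one_of_nonneg_of_lt_one_right (pow_le_one₀ (norm_nonneg q) hq)
        (norm_nonneg z) hz
    rw [qp_succ, qp_succ, pow_succ', mul_assoc q]
    linear_combination (1 - z * q ^ N) * ih + qp q (w * z) N * hf _ hN

variable (hq : ‖q‖ < 1) (w : ℂ) (hz : ‖z‖ < 1)
include hq hz

lemma one_sub_mul_phi21_zero_zero :
    (1 - z) * phi21 q w 0 0 z = (1 - w * z) * phi21 q w 0 0 (q * z) := by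
  have hqz : ‖q * z‖ < 1 := by
    rw [norm_mul]
    exact mul_lt_one_of_nonneg_of_lt_one_left (norm_nonneg q) hq hz.le
  have hR := absConvergesAt_phi21Series hq w 0 0 hz
  have hσR := absConvergesAt_rescale.mpr (absConvergesAt_phi21Series hq w 0 0 hqz)
  have h := one_sub_X_mul_phi21Series_zero_zero (mul_pow_ne_one_of_norm_lt_one hq.le hq) w
  have hX : (1 - X : ℂ⟦X⟧) = 1 - C 1 * X := by rw [map_one, one_mul]
  rw [hX] at h
  simpa only [tsumEval_one_sub_C_mul_X_mul _ hR, tsumEval_one_sub_C_mul_X_mul _ hσR,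
    tsumEval_rescale, ← phi21_eq_tsumEval, one_mul] using congrArg (tsumEval · z) h

/-- The `q`-binomial theorem. -/
theorem phi21_zero_zero_eq_div : phi21 q w 0 0 z = qpi q (w * z) / qpi q z := by
  rw [eq_div_iff (qpi_ne_zero hq (mul_pow_ne_one_of_norm_lt_one hq.le hz))]
  have hqN : Tendsto (fun N : ℕ => q ^ N * z) atTop (𝓝 0) := by
    simpa using (tendsto_pow_atTop_nhds_zero_of_norm_lt_one hq).mul_const z
  have hle (N : ℕ) : ‖q ^ N * z‖ ≤ ‖z‖ := by
    rw [norm_mul, norm_pow]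
    exact mul_le_of_le_one_left (norm_nonneg z) (pow_le_one₀ (norm_nonneg q) hq.le)
  have hR : Tendsto (fun N : ℕ => phi21 q w 0 0 (q ^ N * z)) atTop (𝓝 1) := by
    simpa only [phi21_eq_tsumEval, constantCoeff_phi21Series] using
      (absConvergesAt_phi21Series hq w 0 0 hz).tendsto_tsumEval hqN (.of_forall hle)
  have hiter := mul_qp_eq_qp_mul_of_qdiff hq.le
    (fun _ hx => one_sub_mul_phi21_zero_zero hq w hx) hz
  have hlim := ((tendsto_qp hq (w * z)).mul hR).congr fun N => (hiter N).symm
  rw [mul_one] at hlim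
  exact tendsto_nhds_unique ((tendsto_qp hq z).const_mul _) hlim

end QBinomial

/-- Euler's transformation with `α`, `β`, `w` in the roles of `c/a`, `c/b`, `ab/c`. -/
theorem stmt6_general {q a b c w α β z : ℂ} (hq0 : q ≠ 0) (hq : ‖q‖ < 1)
    (ha : w * β = a) (hb : w * α = b) (hc : w * α * β = c) (hcq : ∀ n : ℕ, c * q ^ n ≠ 1)
    (hz : ‖z‖ < 1) (hwz : ‖w * z‖ < 1) :
    phi21 q a b c z = qpi q (w * z) / qpi q z * phi21 q α β c (w * z) := by
  subst ha hb hc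
  have hR := absConvergesAt_phi21Series hq w 0 0 hz
  have hG := absConvergesAt_rescale.mpr (absConvergesAt_phi21Series hq α β (w * α * β) hwz)
  rw [phi21_eq_tsumEval,
    phi21Series_eq_mul_rescale (mul_pow_ne_one_of_norm_lt_one hq.le hq) hq0 hcq,
    tsumEval_mul hR hG, tsumEval_rescale, ← phi21_eq_tsumEval, ← phi21_eq_tsumEval,
    phi21_zero_zero_eq_div hq w hz]

/-- The (Heine/Euler) transformation
`₂φ₁(a,b;c;q,z) = ((abz/c;q)_∞/(z;q)_∞) ₂φ₁(c/a, c/b; c; q, abz/c)`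
for `0<q<1`, `c ∉ {1,q^{-1},q^{-2},…}`, `c ≠ 0` (and `a,b ≠ 0` so that
`c/a`, `c/b` are meaningful), `|z|<1` and `|abz/c|<1`. -/
theorem stmt6 (q : ℝ) (hq0 : 0 < q) (hq1 : q < 1) (a b c z : ℂ)
    (ha : a ≠ 0) (hb : b ≠ 0) (hc0 : c ≠ 0)
    (hc : ∀ n : ℕ, c * (q : ℂ) ^ n ≠ 1)
    (hz : ‖z‖ < 1) (hz' : ‖a * b * z / c‖ < 1) :
    phi21 (q : ℂ) a b c z =
      qpi (q : ℂ) (a * b * z / c) / qpi (q : ℂ) z *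
        phi21 (q : ℂ) (c / a) (c / b) c (a * b * z / c) := by
  have hq : ‖(q : ℂ)‖ < 1 := by rwa [Complex.norm_of_nonneg hq0.le]
  rw [mul_div_right_comm] at hz' ⊢
  exact stmt6_general (Complex.ofReal_ne_zero.mpr hq0.ne') hq (by field_simp) (by field_simp)
    (by field_simp) hc hz hz'
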